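/- arXiv:1311.5256 — 3 statements merged into one kernel-verified Lean document; each statement's English description precedes it below -/
import Mathlib

section
/- If an algebraic curvature operator R on ℝ⁴ is NNIC₊ and scal(R) = 0, then its self-dual Weyl part vanishes: W₊ = 0 (equivalently P₊(Rη) = 0 for every η ∈ Λ²₊). -/
noncomputable section

open scoped ComplexConjugate

/-- `ℝ⁴` with its standard basis. -/
abbrev V4 := Fin 4 → ℝ
/-- `Λ²ℝ⁴` in the coordinates given by the basis
`e₁∧e₂, e₁∧e₃, e₁∧e₄, e₂∧e₃, e₂∧e₄, e₃∧e₄` (0-indexed). -/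
abbrev L6 := Fin 6 → ℝ
/-- Endomorphisms of `Λ²ℝ⁴`, as `6×6` matrices. -/
abbrev M6 := Fin 6 → Fin 6 → ℝ

/-- standard basis of ℝ⁴ -/
def std4 (i : Fin 4) : V4 := fun j => if j = i then 1 else 0

/-- the standard inner product of ℝ⁴ -/
def ip4 (x y : V4) : ℝ := ∑ i, x i * y i

/-- the index pairs for the basis of Λ²ℝ⁴ -/
def pr : Fin 6 → Fin 4 × Fin 4 := ![(0,1),(0,2),(0,3),(1,2),(1,3),(2,3)]

/-- the wedge product `x ∧ y` of two vectors, in coordinates.  With this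
coordinate expression, the standard inner product `ip6` below satisfies
`⟨x∧y, z∧t⟩ = ⟨x,z⟩⟨y,t⟩ − ⟨x,t⟩⟨y,z⟩`. -/
def wedge (x y : V4) : L6 := fun k => x (pr k).1 * y (pr k).2 - x (pr k).2 * y (pr k).1

/-- the inner product of Λ²ℝ⁴ -/
def ip6 (a b : L6) : ℝ := ∑ k, a k * b k

/-- The Hodge star operator on Λ²ℝ⁴. -/
def hodge (w : L6) : L6 := ![w 5, -(w 4), w 3, w 2, -(w 1), w 0]

/-- self-dual 2-forms (the +1 eigenspace Λ²₊ of the Hodge star) -/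
def SelfDual (w : L6) : Prop := hodge w = w
/-- anti-self-dual 2-forms (the −1 eigenspace Λ²₋ of the Hodge star) -/
def AntiSelfDual (w : L6) : Prop := hodge w = -w

/-- application of an endomorphism (matrix) of Λ²ℝ⁴ to a 2-form -/
def appM (A : M6) (w : L6) : L6 := fun k => ∑ l, A k l * w l

/-- symmetry of an endomorphism of Λ²ℝ⁴ w.r.t. the inner product -/
def IsSymm6 (A : M6) : Prop := ∀ a b : L6, ip6 (appM A a) b = ip6 a (appM A b)

/-- the first Bianchi identity -/
def Bianchi (A : M6) : Prop := ∀ x y z t : V4,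
  ip6 (appM A (wedge x y)) (wedge z t) + ip6 (appM A (wedge z x)) (wedge y t)
    + ip6 (appM A (wedge y z)) (wedge x t) = 0

/-- algebraic curvature operators on ℝ⁴ : symmetric endomorphisms of Λ²ℝ⁴
satisfying the first Bianchi identity.  The set of these is `S²_BΛ²ℝ⁴`. -/
def IsCurvOp (A : M6) : Prop := IsSymm6 A ∧ Bianchi A

/-- the scalar curvature: twice the trace -/
def scal (A : M6) : ℝ := 2 * ∑ k, A k k

/-- orthogonal projection P₊ of Λ²ℝ⁴ onto Λ²₊ -/
def pplus (w : L6) : L6 := (1/2 : ℝ) • (w + hodge w)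

/-- the self-dual Weyl part W₊ of a curvature operator, as a map on Λ²₊:
`W₊η = P₊(Rη) − (scal(R)/12)·η`. -/
def Wplus (A : M6) (η : L6) : L6 := pplus (appM A η) - (scal A / 12) • η

/-- `R` is PIC₊ : the quadratic form `η ↦ ⟨Rη,η⟩` on Λ²₊ is 2-positive. -/
def PICp (A : M6) : Prop := ∀ η ζ : L6, SelfDual η → SelfDual ζ →
  ip6 η η = 1 → ip6 ζ ζ = 1 → ip6 η ζ = 0 →
  0 < ip6 (appM A η) η + ip6 (appM A ζ) ζ

/-- `R` is NNIC₊ : the quadratic form `η ↦ ⟨Rη,η⟩` on Λ²₊ is 2-nonnegative. -/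
def NNICp (A : M6) : Prop := ∀ η ζ : L6, SelfDual η → SelfDual ζ →
  ip6 η η = 1 → ip6 ζ ζ = 1 → ip6 η ζ = 0 →
  0 ≤ ip6 (appM A η) η + ip6 (appM A ζ) ζ

/-- `R` is PIC₋ : the quadratic form `η ↦ ⟨Rη,η⟩` on Λ²₋ is 2-positive. -/
def PICm (A : M6) : Prop := ∀ η ζ : L6, AntiSelfDual η → AntiSelfDual ζ →
  ip6 η η = 1 → ip6 ζ ζ = 1 → ip6 η ζ = 0 →
  0 < ip6 (appM A η) η + ip6 (appM A ζ) ζ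

/-- `R` is NNIC₋ : the quadratic form `η ↦ ⟨Rη,η⟩` on Λ²₋ is 2-nonnegative. -/
def NNICm (A : M6) : Prop := ∀ η ζ : L6, AntiSelfDual η → AntiSelfDual ζ →
  ip6 η η = 1 → ip6 ζ ζ = 1 → ip6 η ζ = 0 →
  0 ≤ ip6 (appM A η) η + ip6 (appM A ζ) ζ

/- ### complexifications -/

/-- `ℂ⁴` -/
abbrev VC4 := Fin 4 → ℂ
/-- `Λ²ℂ⁴` -/
abbrev LC6 := Fin 6 → ℂ

/-- the wedge product on ℂ⁴ -/
def wedgeC (x y : VC4) : LC6 := fun k => x (pr k).1 * y (pr k).2 - x (pr k).2 * y (pr k).1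

/-- the complex-bilinear extension of the inner product of ℝ⁴ -/
def bilC4 (x y : VC4) : ℂ := ∑ i, x i * y i

/-- the complex-bilinear extension of the inner product of Λ²ℝ⁴ -/
def bilC6 (a b : LC6) : ℂ := ∑ k, a k * b k

/-- the Hermitian inner product `⟨·,·⟩_h` on Λ²ℂ⁴ associated to the real inner
product on Λ²ℝ⁴ -/
def hermC6 (a b : LC6) : ℂ := ∑ k, a k * conj (b k)

/-- the complex-linear extension of an endomorphism of Λ²ℝ⁴ to Λ²ℂ⁴ -/
def appMC (A : M6) (w : LC6) : LC6 := fun k => ∑ l, (A k l : ℂ) * w l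

/-- the complex-linear extension of the Hodge star -/
def hodgeC (w : LC6) : LC6 := ![w 5, -(w 4), w 3, w 2, -(w 1), w 0]

/-- membership in `Λ²₊ ⊗ ℂ` -/
def SelfDualC (w : LC6) : Prop := hodgeC w = w

/-!
In an orthonormal frame of `Λ²₊`, the compression `P₊RP₊` becomes a symmetric `3 × 3` matrix. Its
trace is `tr(P₊R) = (tr R + tr(R*)) / 2 = scal(R) / 4`, because the Bianchi identity says that
`tr(R*) = 0`. If the scalar curvature vanishes, its three eigenvalues therefore sum to zero, while
NNIC₊ makes the sum of any two of them nonnegative. A negative eigenvalue would make the other two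
positive and the total positive; so all eigenvalues are nonnegative, hence zero.
-/

open Matrix

open Finset in
theorem eq_zero_of_pairwise_add_nonneg_of_sum_eq_zero {ι M : Type*} [Fintype ι] [AddCommGroup M]
    [LinearOrder M] [IsOrderedAddMonoid M] (hι : 2 < Fintype.card ι) {f : ι → M}
    (hf : Pairwise fun i j ↦ 0 ≤ f i + f j) (hsum : ∑ i, f i = 0) : f = 0 := by
  classical
  have hnonneg : ∀ i, 0 ≤ f i := by
    intro i
    by_contra! hi
    have hpos : ∀ j, j ≠ i → 0 < f j := fun j hj ↦
      (neg_pos.mpr hi).trans_le (neg_le_iff_add_nonneg'.mpr (hf hj.symm))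
    obtain ⟨j, hj, k, hk, hjk⟩ : ∃ j ∈ univ.erase i, ∃ k ∈ univ.erase i, j ≠ k := by
      rw [← one_lt_card, card_erase_of_mem (mem_univ i), card_univ]
      lia
    have hlt : f j < ∑ l ∈ univ.erase i, f l :=
      single_lt_sum hjk.symm hj hk (hpos k (ne_of_mem_erase hk))
        fun l hl _ ↦ (hpos l (ne_of_mem_erase hl)).le
    have : 0 < ∑ l, f l :=
      calc 0 ≤ f i + f j := hf (ne_of_mem_erase hj).symm
        _ < f i + ∑ l ∈ univ.erase i, f l := by gcongr
        _ = ∑ l, f l := add_sum_erase univ f (mem_univ i)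
    exact this.ne' hsum
  exact (Fintype.sum_eq_zero_iff_of_nonneg hnonneg).mp hsum

section TwoNonneg

variable {𝕜 n : Type*} [RCLike 𝕜] [Fintype n]

/-- The quadratic form of a matrix is 2-nonnegative: its values at the two vectors of any
orthonormal pair have a nonnegative sum. -/
def IsTwoNonneg (M : Matrix n n 𝕜) : Prop :=
  ∀ u v : n → 𝕜, star u ⬝ᵥ u = 1 → star v ⬝ᵥ v = 1 → star u ⬝ᵥ v = 0 →
    0 ≤ RCLike.re (star u ⬝ᵥ M *ᵥ u) + RCLike.re (star v ⬝ᵥ M *ᵥ v)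

theorem IsTwoNonneg.pairwise_eigenvalues_add_nonneg [DecidableEq n] {M : Matrix n n 𝕜}
    (hM : IsTwoNonneg M) (hherm : M.IsHermitian) :
    Pairwise fun i j ↦ 0 ≤ hherm.eigenvalues i + hherm.eigenvalues j := by
  intro i j hij
  have horth (k l : n) : star (hherm.eigenvectorBasis k).ofLp ⬝ᵥ (hherm.eigenvectorBasis l).ofLp =
      if k = l then 1 else 0 := by
    rw [dotProduct_comm, ← EuclideanSpace.inner_eq_star_dotProduct]
    exact orthonormal_iff_ite.mp hherm.eigenvectorBasis.orthonormal k l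
  rw [hherm.eigenvalues_eq, hherm.eigenvalues_eq]
  exact hM _ _ (by simp [horth]) (by simp [horth]) (by simp [horth, hij])

theorem IsTwoNonneg.eq_zero_of_trace_eq_zero {M : Matrix n n 𝕜} (hM : IsTwoNonneg M)
    (hherm : M.IsHermitian) (hn : 2 < Fintype.card n) (htr : M.trace = 0) : M = 0 := by
  classical
  have hsum : ∑ i, hherm.eigenvalues i = 0 := by
    exact_mod_cast hherm.trace_eq_sum_eigenvalues.symm.trans htr
  exact hherm.eigenvalues_eq_zero_iff.mp <|
    eq_zero_of_pairwise_add_nonneg_of_sum_eq_zero hn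
      (hM.pairwise_eigenvalues_add_nonneg hherm) hsum

end TwoNonneg

theorem SelfDual.pplus_eq {w : L6} (hw : SelfDual w) : pplus w = w := by
  rw [pplus, hw, ← two_smul ℝ w, smul_smul]
  norm_num

/-- The matrix of the Hodge star in the basis `e₁∧e₂, e₁∧e₃, e₁∧e₄, e₂∧e₃, e₂∧e₄, e₃∧e₄`. -/
def hodgeMatrix : Matrix (Fin 6) (Fin 6) ℝ :=
  !![0, 0, 0, 0, 0, 1;
     0, 0, 0, 0, -1, 0;
     0, 0, 0, 1, 0, 0;
     0, 0, 1, 0, 0, 0;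
     0, -1, 0, 0, 0, 0;
     1, 0, 0, 0, 0, 0]

theorem hodgeMatrix_mulVec (w : L6) : hodgeMatrix *ᵥ w = hodge w := by
  ext k
  fin_cases k <;> simp [hodgeMatrix, hodge, mulVec, dotProduct, Fin.sum_univ_six]

theorem hodgeMatrix_mul_self : hodgeMatrix * hodgeMatrix = 1 := by
  ext i j
  fin_cases i <;> fin_cases j <;> simp [hodgeMatrix, mul_apply, Fin.sum_univ_six]

theorem selfDual_pplus (w : L6) : SelfDual (pplus w) := by
  rw [SelfDual, pplus, ← hodgeMatrix_mulVec, ← hodgeMatrix_mulVec, mulVec_smul, mulVec_add,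
    mulVec_mulVec, hodgeMatrix_mul_self, one_mulVec, add_comm]

theorem Bianchi.trace_mul_hodgeMatrix {A : M6} (hA : Bianchi A) :
    (of A * hodgeMatrix).trace = 0 := by
  -- Up to sign, each term of `tr(R*)` occurs in exactly two of these four instances.
  have h₁ : -A 2 3 + A 1 4 - A 0 5 = 0 := by
    simpa [ip6, appM, wedge, std4, pr, Fin.sum_univ_six, sub_eq_add_neg] using
      hA (std4 1) (std4 2) (std4 3) (std4 0)
  have h₂ : -A 4 1 + A 3 2 + A 0 5 = 0 := by
    simpa [ip6, appM, wedge, std4, pr, Fin.sum_univ_six] using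
      hA (std4 0) (std4 2) (std4 3) (std4 1)
  have h₃ : -A 5 0 - A 3 2 + A 1 4 = 0 := by
    simpa [ip6, appM, wedge, std4, pr, Fin.sum_univ_six, sub_eq_add_neg] using
      hA (std4 0) (std4 1) (std4 3) (std4 2)
  have h₄ : A 5 0 - A 4 1 + A 2 3 = 0 := by
    simpa [ip6, appM, wedge, std4, pr, Fin.sum_univ_six, sub_eq_add_neg] using
      hA (std4 0) (std4 1) (std4 2) (std4 3)
  have htrace : (of A * hodgeMatrix).trace =
      A 0 5 - A 1 4 + A 2 3 + A 3 2 - A 4 1 + A 5 0 := by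
    simp [trace, hodgeMatrix, mul_apply, Fin.sum_univ_six, sub_eq_add_neg]
  rw [htrace]
  linear_combination (h₂ + h₄ - h₁ - h₃) / 2

/-- The matrix whose columns are the orthonormal basis `(e₁∧e₂ + e₃∧e₄)/√2`,
`(e₁∧e₃ - e₂∧e₄)/√2`, `(e₁∧e₄ + e₂∧e₃)/√2` of `Λ²₊`; it identifies `ℝ³` isometrically with `Λ²₊`. -/
def selfDualFrame : Matrix (Fin 6) (Fin 3) ℝ :=
  (√2)⁻¹ • !![1, 0, 0;
              0, 1, 0;
              0, 0, 1;
              0, 0, 1;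
              0, -1, 0;
              1, 0, 0]

theorem selfDualFrame_transpose_mul_self : selfDualFrameᵀ * selfDualFrame = 1 := by
  ext i j
  fin_cases i <;> fin_cases j <;>
    simp [selfDualFrame, mul_apply, Fin.sum_univ_six, ← mul_inv, ← two_mul]

theorem selfDualFrame_mul_transpose :
    selfDualFrame * selfDualFrameᵀ = (1 / 2 : ℝ) • (1 + hodgeMatrix) := by
  ext i j
  fin_cases i <;> fin_cases j <;>
    simp [selfDualFrame, hodgeMatrix, mul_apply, Fin.sum_univ_three, ← mul_inv]

theorem selfDualFrame_mulVec_transpose_mulVec (w : L6) :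
    selfDualFrame *ᵥ selfDualFrameᵀ *ᵥ w = pplus w := by
  rw [mulVec_mulVec, selfDualFrame_mul_transpose, smul_mulVec, add_mulVec, one_mulVec,
    hodgeMatrix_mulVec, pplus]

theorem selfDual_selfDualFrame_mulVec (x : Fin 3 → ℝ) : SelfDual (selfDualFrame *ᵥ x) := by
  have hx : pplus (selfDualFrame *ᵥ x) = selfDualFrame *ᵥ x := by
    rw [← selfDualFrame_mulVec_transpose_mulVec, mulVec_mulVec x,
      selfDualFrame_transpose_mul_self, one_mulVec]
  exact hx ▸ selfDual_pplus _

theorem ip6_selfDualFrame_mulVec_left (x : Fin 3 → ℝ) (w : L6) :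
    ip6 (selfDualFrame *ᵥ x) w = x ⬝ᵥ selfDualFrameᵀ *ᵥ w := by
  rw [dotProduct_mulVec, vecMul_transpose, ip6, dotProduct]

theorem ip6_selfDualFrame_mulVec (x y : Fin 3 → ℝ) :
    ip6 (selfDualFrame *ᵥ x) (selfDualFrame *ᵥ y) = x ⬝ᵥ y := by
  rw [ip6_selfDualFrame_mulVec_left, mulVec_mulVec, selfDualFrame_transpose_mul_self, one_mulVec]

theorem appM_eq_mulVec (A : M6) (w : L6) : appM A w = of A *ᵥ w := rfl

theorem IsSymm6.isSymm {A : M6} (hA : IsSymm6 A) : (of A).IsSymm := by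
  ext i j
  simpa [ip6, appM, Pi.single_apply] using hA (Pi.single i 1) (Pi.single j 1)

/-- The matrix of the compression `P₊RP₊ : Λ²₊ → Λ²₊` in the basis `selfDualFrame`. -/
def selfDualBlock (A : M6) : Matrix (Fin 3) (Fin 3) ℝ :=
  selfDualFrameᵀ * of A * selfDualFrame

theorem IsSymm6.isHermitian_selfDualBlock {A : M6} (hA : IsSymm6 A) :
    (selfDualBlock A).IsHermitian := by
  rw [IsHermitian, conjTranspose_eq_transpose_of_trivial, selfDualBlock, transpose_mul,
    transpose_mul, transpose_transpose, hA.isSymm, Matrix.mul_assoc]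

theorem Bianchi.trace_selfDualBlock {A : M6} (hA : Bianchi A) :
    (selfDualBlock A).trace = scal A / 4 := by
  have hscal : scal A = 2 * (of A).trace := rfl
  rw [selfDualBlock, Matrix.mul_assoc, trace_mul_comm, Matrix.mul_assoc,
    selfDualFrame_mul_transpose, Matrix.mul_smul, trace_smul, Matrix.mul_add, trace_add,
    Matrix.mul_one, hA.trace_mul_hodgeMatrix, hscal, smul_eq_mul]
  ring

theorem ip6_appM_selfDualFrame_mulVec (A : M6) (x : Fin 3 → ℝ) :
    ip6 (appM A (selfDualFrame *ᵥ x)) (selfDualFrame *ᵥ x) = x ⬝ᵥ selfDualBlock A *ᵥ x := by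
  have hcomm (a b : L6) : ip6 a b = ip6 b a := dotProduct_comm a b
  rw [hcomm, ip6_selfDualFrame_mulVec_left, appM_eq_mulVec, mulVec_mulVec, mulVec_mulVec,
    selfDualBlock, Matrix.mul_assoc]

theorem NNICp.isTwoNonneg_selfDualBlock {A : M6} (hA : NNICp A) :
    IsTwoNonneg (selfDualBlock A) := by
  intro u v hu hv huv
  simp only [star_trivial, RCLike.re_to_real] at hu hv huv ⊢
  simp only [← ip6_appM_selfDualFrame_mulVec]
  simp only [← ip6_selfDualFrame_mulVec] at hu hv huv
  exact hA _ _ (selfDual_selfDualFrame_mulVec u) (selfDual_selfDualFrame_mulVec v) hu hv huv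

theorem SelfDual.pplus_appM {η : L6} (hη : SelfDual η) (A : M6) :
    pplus (appM A η) = selfDualFrame *ᵥ selfDualBlock A *ᵥ selfDualFrameᵀ *ᵥ η := by
  conv_lhs => rw [← hη.pplus_eq, ← selfDualFrame_mulVec_transpose_mulVec η]
  simp only [← selfDualFrame_mulVec_transpose_mulVec, appM_eq_mulVec, mulVec_mulVec,
    selfDualBlock, Matrix.mul_assoc]

/-- an NNIC₊ algebraic curvature operator with vanishing scalar
curvature has vanishing self-dual Weyl part. -/
theorem weylPlus_eq_zero_of_nnicPlus_of_scal_eq_zero (A : M6) (hA : IsCurvOp A)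
    (hnn : NNICp A) (hscal : scal A = 0) :
    ∀ η : L6, SelfDual η → Wplus A η = 0 := by
  intro η hη
  have htrace : (selfDualBlock A).trace = 0 := by
    rw [hA.2.trace_selfDualBlock, hscal, zero_div]
  have hblock : selfDualBlock A = 0 :=
    hnn.isTwoNonneg_selfDualBlock.eq_zero_of_trace_eq_zero hA.1.isHermitian_selfDualBlock
      (by simp) htrace
  rw [Wplus, hη.pplus_appM, hblock, hscal, zero_mulVec, mulVec_zero, zero_div, zero_smul, sub_zero]
end
end

section
/- Let R be a symmetric linear endomorphism of Λ²ℝ⁴, extended complex-linearly to Λ²ℂ⁴. Then ⟨Rω,ω⟩_h ≥ 0 for every ω ∈ Λ²₊⊗ℂ whose complex-bilinear square vanishes (⟨ω,ω⟩ = 0, equivalently ω = ω₁ + iω₂ with ω₁,ω₂ ∈ Λ²₊, |ω₁| = |ω₂| and ⟨ω₁,ω₂⟩ = 0) if and only if the quadratic form η ↦ ⟨Rη,η⟩ on Λ²₊ is 2-nonnegative, i.e. ⟨Rη,η⟩ + ⟨Rζ,ζ⟩ ≥ 0 for all η,ζ ∈ Λ²₊ with |η| = |ζ| = 1 and ⟨η,ζ⟩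 = 0. -/
noncomputable section

open scoped ComplexConjugate

/-!
For `ω = x + iy` with `x, y` real, `⟨ω,ω⟩ = |x|² - |y|² + 2i⟨x,y⟩`, while
`⟨Rω,ω⟩_h = ⟨Rx,x⟩ + ⟨Ry,y⟩ + i(⟨Ry,x⟩ - ⟨Rx,y⟩)`, whose imaginary part vanishes by symmetry of `R`.
Hence null vectors correspond to orthogonal pairs of equal length, and by homogeneity such a pair is
either zero or can be rescaled to an orthonormal one. Only the real structure matters, so `Λ²₊` may
be replaced by any subspace of `ℝⁿ`.
-/

open scoped Matrix

section RealAndImaginaryParts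

variable {m n : Type*} [Fintype n]

theorem re_dotProduct_eq_sub (v w : n → ℂ) :
    (v ⬝ᵥ w).re = (Complex.re ∘ v) ⬝ᵥ (Complex.re ∘ w) - (Complex.im ∘ v) ⬝ᵥ (Complex.im ∘ w) := by
  simp [dotProduct, Finset.sum_sub_distrib]

theorem im_dotProduct_eq_add (v w : n → ℂ) :
    (v ⬝ᵥ w).im = (Complex.re ∘ v) ⬝ᵥ (Complex.im ∘ w) + (Complex.im ∘ v) ⬝ᵥ (Complex.re ∘ w) := by
  simp [dotProduct, Finset.sum_add_distrib]

theorem re_comp_map_ofReal_mulVec (A : Matrix m n ℝ) (v : n → ℂ) :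
    Complex.re ∘ (A.map Complex.ofReal *ᵥ v) = A *ᵥ (Complex.re ∘ v) := by
  ext i
  simp [Matrix.mulVec, dotProduct]

theorem im_comp_map_ofReal_mulVec (A : Matrix m n ℝ) (v : n → ℂ) :
    Complex.im ∘ (A.map Complex.ofReal *ᵥ v) = A *ᵥ (Complex.im ∘ v) := by
  ext i
  simp [Matrix.mulVec, dotProduct]

theorem re_comp_star (v : m → ℂ) : Complex.re ∘ star v = Complex.re ∘ v := rfl

theorem im_comp_star (v : m → ℂ) : Complex.im ∘ star v = -(Complex.im ∘ v) := rfl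

theorem dotProduct_self_eq_zero_iff_re_im (v : n → ℂ) :
    v ⬝ᵥ v = 0 ↔
      (Complex.re ∘ v) ⬝ᵥ (Complex.re ∘ v) = (Complex.im ∘ v) ⬝ᵥ (Complex.im ∘ v) ∧
        (Complex.re ∘ v) ⬝ᵥ (Complex.im ∘ v) = 0 := by
  rw [Complex.ext_iff, re_dotProduct_eq_sub, im_dotProduct_eq_add,
    dotProduct_comm (Complex.im ∘ v) (Complex.re ∘ v), Complex.zero_re, Complex.zero_im,
    sub_eq_zero, add_self_eq_zero]

theorem re_mulVec_dotProduct_star (A : Matrix n n ℝ) (v : n → ℂ) :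
    ((A.map Complex.ofReal *ᵥ v) ⬝ᵥ star v).re =
      (A *ᵥ (Complex.re ∘ v)) ⬝ᵥ (Complex.re ∘ v) +
        (A *ᵥ (Complex.im ∘ v)) ⬝ᵥ (Complex.im ∘ v) := by
  rw [re_dotProduct_eq_sub, re_comp_map_ofReal_mulVec, im_comp_map_ofReal_mulVec, re_comp_star,
    im_comp_star, dotProduct_neg, sub_neg_eq_add]

theorem im_mulVec_dotProduct_star (A : Matrix n n ℝ) (v : n → ℂ) :
    ((A.map Complex.ofReal *ᵥ v) ⬝ᵥ star v).im =
      (A *ᵥ (Complex.im ∘ v)) ⬝ᵥ (Complex.re ∘ v) -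
        (A *ᵥ (Complex.re ∘ v)) ⬝ᵥ (Complex.im ∘ v) := by
  rw [im_dotProduct_eq_add, re_comp_map_ofReal_mulVec, im_comp_map_ofReal_mulVec, re_comp_star,
    im_comp_star, dotProduct_neg, neg_add_eq_sub]

end RealAndImaginaryParts

section Subspace

variable {n : Type*}

/-- The complexification `p ⊗ ℂ` of a subspace `p` of `ℝⁿ`, realised inside `ℂⁿ` as the vectors
whose real and imaginary parts lie in `p`. -/
def complexification (p : Submodule ℝ (n → ℝ)) : Submodule ℂ (n → ℂ) where
  carrier := {v | Complex.re ∘ v ∈ p ∧ Complex.im ∘ v ∈ p}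
  zero_mem' := ⟨p.zero_mem, p.zero_mem⟩
  add_mem' hv hw := ⟨p.add_mem hv.1 hw.1, p.add_mem hv.2 hw.2⟩
  smul_mem' c _ hv :=
    ⟨p.sub_mem (p.smul_mem c.re hv.1) (p.smul_mem c.im hv.2),
      p.add_mem (p.smul_mem c.re hv.2) (p.smul_mem c.im hv.1)⟩

variable [Fintype n]

/-- The quadratic form `x ↦ ⟨Ax, x⟩` is 2-nonnegative on the subspace `p` of `ℝⁿ`: its values on any
two orthonormal vectors of `p` have nonnegative sum. -/
def TwoNonnegOn (A : Matrix n n ℝ) (p : Submodule ℝ (n → ℝ)) : Prop :=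
  ∀ x y : n → ℝ, x ∈ p → y ∈ p → x ⬝ᵥ x = 1 → y ⬝ᵥ y = 1 → x ⬝ᵥ y = 0 →
    0 ≤ (A *ᵥ x) ⬝ᵥ x + (A *ᵥ y) ⬝ᵥ y

namespace TwoNonnegOn

theorem add_nonneg_of_dotProduct_self_eq {A : Matrix n n ℝ} {p : Submodule ℝ (n → ℝ)}
    (h : TwoNonnegOn A p) {x y : n → ℝ} (hx : x ∈ p) (hy : y ∈ p)
    (hxy : x ⬝ᵥ x = y ⬝ᵥ y) (horth : x ⬝ᵥ y = 0) :
    0 ≤ (A *ᵥ x) ⬝ᵥ x + (A *ᵥ y) ⬝ᵥ y := by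
  rcases eq_or_ne x 0 with rfl | hx0
  · obtain rfl : y = 0 := dotProduct_self_eq_zero.1 (by rw [← hxy, zero_dotProduct])
    simp
  · have hpos : 0 < x ⬝ᵥ x := Matrix.dotProduct_self_star_pos_iff.2 hx0
    set c := (√(x ⬝ᵥ x))⁻¹
    have dotProduct_smul_smul (u v : n → ℝ) : (c • u) ⬝ᵥ (c • v) = (x ⬝ᵥ x)⁻¹ * (u ⬝ᵥ v) := by
      rw [smul_dotProduct, dotProduct_smul, smul_smul, ← mul_inv, Real.mul_self_sqrt hpos.le,
        smul_eq_mul]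
    have hunit : (x ⬝ᵥ x)⁻¹ * (x ⬝ᵥ x) = 1 := inv_mul_cancel₀ hpos.ne'
    have hscaled := h (c • x) (c • y) (p.smul_mem c hx) (p.smul_mem c hy)
      (by rw [dotProduct_smul_smul, hunit]) (by rw [dotProduct_smul_smul, ← hxy, hunit])
      (by rw [dotProduct_smul_smul, horth, mul_zero])
    rw [Matrix.mulVec_smul, Matrix.mulVec_smul, dotProduct_smul_smul, dotProduct_smul_smul,
      ← mul_add] at hscaled
    exact nonneg_of_mul_nonneg_right hscaled (inv_pos.2 hpos)

end TwoNonnegOn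

open scoped ComplexOrder in
theorem nonneg_on_null_selfdual_iff_two_nonneg_general (A : Matrix n n ℝ)
    (p : Submodule ℝ (n → ℝ))
    (hA : ∀ x ∈ p, ∀ y ∈ p, (A *ᵥ x) ⬝ᵥ y = x ⬝ᵥ (A *ᵥ y)) :
    (∀ v ∈ complexification p, v ⬝ᵥ v = 0 → 0 ≤ (A.map Complex.ofReal *ᵥ v) ⬝ᵥ star v) ↔
      TwoNonnegOn A p := by
  constructor
  · intro h x y hx hy hx1 hy1 horth
    let v : n → ℂ := fun i => ⟨x i, y i⟩
    have hnull : v ⬝ᵥ v = 0 :=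
      (dotProduct_self_eq_zero_iff_re_im v).2 ⟨hx1.trans hy1.symm, horth⟩
    have hre := (Complex.nonneg_iff.1 (h v ⟨hx, hy⟩ hnull)).1
    rwa [re_mulVec_dotProduct_star] at hre
  · intro h v ⟨hre, him⟩ hnull
    obtain ⟨hnorm, horth⟩ := (dotProduct_self_eq_zero_iff_re_im v).1 hnull
    rw [Complex.nonneg_iff, re_mulVec_dotProduct_star, im_mulVec_dotProduct_star]
    exact ⟨h.add_nonneg_of_dotProduct_self_eq hre him hnorm horth,
      by rw [hA _ him _ hre, dotProduct_comm, sub_self]⟩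

end Subspace

section SelfDualForms

/-- The Hodge star as a linear map, so that `Λ²₊` can be formed as a subspace. -/
def hodgeLinearMap : L6 →ₗ[ℝ] L6 where
  toFun := hodge
  map_add' v w := by
    ext k
    fin_cases k <;> simp [hodge, add_comm]
  map_smul' c v := by
    ext k
    fin_cases k <;> simp [hodge]

/-- The subspace `Λ²₊` of self-dual forms; membership is `SelfDual` by definition. -/
def selfDualForms : Submodule ℝ L6 := LinearMap.eqLocus hodgeLinearMap LinearMap.id

theorem re_comp_hodgeC (w : LC6) : Complex.re ∘ hodgeC w = hodge (Complex.re ∘ w) := by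
  ext k
  fin_cases k <;> simp [hodge, hodgeC]

theorem im_comp_hodgeC (w : LC6) : Complex.im ∘ hodgeC w = hodge (Complex.im ∘ w) := by
  ext k
  fin_cases k <;> simp [hodge, hodgeC]

theorem selfDualC_iff_mem_complexification (w : LC6) :
    SelfDualC w ↔ w ∈ complexification selfDualForms := by
  change hodgeC w = w ↔
    hodge (Complex.re ∘ w) = Complex.re ∘ w ∧ hodge (Complex.im ∘ w) = Complex.im ∘ w
  rw [← re_comp_hodgeC, ← im_comp_hodgeC]
  simp only [funext_iff, Complex.ext_iff, forall_and, Function.comp_apply]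

end SelfDualForms

open scoped ComplexOrder in
/-- for a symmetric endomorphism of `Λ²ℝ⁴`, nonnegativity on all
`ω ∈ Λ²₊⊗ℂ` with vanishing bilinear square is equivalent to 2-nonnegativity
of `η ↦ ⟨Rη,η⟩` on `Λ²₊`. -/
theorem nonneg_on_null_selfdual_iff_two_nonneg (A : M6) (hA : IsSymm6 A) :
    (∀ ω : LC6, SelfDualC ω → bilC6 ω ω = 0 →
      0 ≤ hermC6 (appMC A ω) ω) ↔
    (∀ η ζ : L6, SelfDual η → SelfDual ζ → ip6 η η = 1 → ip6 ζ ζ = 1 →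
      ip6 η ζ = 0 → 0 ≤ ip6 (appM A η) η + ip6 (appM A ζ) ζ) := by
  simp only [selfDualC_iff_mem_complexification]
  exact nonneg_on_null_selfdual_iff_two_nonneg_general A selfDualForms fun x _ y _ => hA x y
end
end

section
/- Let P : ℝ⁴ → ℝ⁴ be the orthogonal projection onto a 3-dimensional linear subspace and let R be the symmetric endomorphism of Λ²ℝ⁴ determined by ⟨R(x∧y), z∧t⟩ = ⟨Px,z⟩⟨Py,t⟩ − ⟨Px,t⟩⟨Py,z⟩ (the curvature operator of the product ℝ×S³). Then R is an algebraic curvature operator on ℝ⁴ which is both PIC₊ and PIC₋. -/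
noncomputable section

open scoped ComplexConjugate

/-!
Identify a 2-form `w` with the skew matrix `M w` having `(i, j)` entry `w` on `eᵢ ∧ eⱼ`. The
operator in question is the exterior square of `P`, which acts by `M ↦ P M Pᵀ`. The matrix `1 - P`
is a rank-one idempotent `u vᵀ`, hence `(1 - P) M (1 - P)ᵀ = (vᵀ M v) u uᵀ = 0` for skew `M`.
For (anti-)self-dual `w` the columns of `M w` are orthogonal of equal length:
`(M w)ᵀ M w = (|w|² / 2) 1`. Expanding the trace of `(P M Pᵀ)ᵀ M` with these two facts
gives `⟨R w, w⟩ = |w|² / 2`, so on either eigenspace two unit forms contribute a total of `1`.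
-/

section IdempotentMatrix

open Matrix

variable {n : Type*} [Fintype n]

theorem dotProduct_mulVec_self_eq_zero_of_transpose_eq_neg {R : Type*} [CommRing R]
    [NoZeroDivisors R] [CharZero R] {M : Matrix n n R} (hM : Mᵀ = -M) (v : n → R) :
    v ⬝ᵥ M *ᵥ v = 0 := by
  have h := dotProduct_transpose_mulVec M v v
  rw [hM, neg_mulVec, dotProduct_neg] at h
  exact self_eq_neg.mp h.symm

variable {K : Type*} [Field K] [CharZero K]

theorem exists_eq_vecMulVec_of_isIdempotentElem_of_trace_eq_one {Q : Matrix n n K}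
    (hQ : IsIdempotentElem Q) (htrace : Q.trace = 1) : ∃ u v, Q = vecMulVec u v := by
  classical
  have hproj : IsIdempotentElem (toLin' Q) := hQ.map toLinAlgEquiv'
  have hrank : Module.finrank K (LinearMap.range (toLin' Q)) = 1 := by
    have h := (LinearMap.IsIdempotentElem.isProj_range _ hproj).trace
    rw [trace_toLin'_eq, htrace] at h
    exact_mod_cast h.symm
  obtain ⟨u, -, hu⟩ := finrank_eq_one_iff'.mp hrank
  choose v hv using fun j => hu ⟨toLin' Q (Pi.single j 1), LinearMap.mem_range_self _ _⟩
  refine ⟨u, v, ?_⟩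
  ext i j
  have hcol : v j * u.1 i = Q i j := by
    simpa using congr_fun (congr_arg Subtype.val (hv j)) i
  rw [vecMulVec_apply, ← hcol, mul_comm]

theorem mul_mul_transpose_eq_zero_of_trace_eq_one {Q M : Matrix n n K}
    (hQ : IsIdempotentElem Q) (htrace : Q.trace = 1) (hM : Mᵀ = -M) : Q * M * Qᵀ = 0 := by
  obtain ⟨u, v, rfl⟩ := exists_eq_vecMulVec_of_isIdempotentElem_of_trace_eq_one hQ htrace
  rw [transpose_vecMulVec, vecMulVec_mul, vecMulVec_mul_vecMulVec, ← dotProduct_mulVec,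
    dotProduct_mulVec_self_eq_zero_of_transpose_eq_neg hM, zero_smul, vecMulVec_zero]

theorem trace_conj_mul_of_transpose_mul_self_eq_smul_one [DecidableEq n] {P M : Matrix n n K}
    {c : K} (hP : IsIdempotentElem P) (htrace : P.trace = Fintype.card n - 1) (hM : Mᵀ = -M)
    (hMM : Mᵀ * M = c • 1) : ((P * M * Pᵀ)ᵀ * M).trace = c * (Fintype.card n - 2) := by
  set Q := 1 - P with hQ
  have hQtrace : Q.trace = 1 := by rw [hQ, trace_sub, trace_one, htrace, sub_sub_cancel]
  have hQMQ : Q * M * Qᵀ = 0 := mul_mul_transpose_eq_zero_of_trace_eq_one hP.one_sub hQtrace hM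
  have hMM' : M * Mᵀ = c • 1 := by rw [← hMM, hM, mul_neg, neg_mul]
  have hPQ : P = 1 - Q := (sub_sub_cancel 1 P).symm
  have hPMP : P * M * Pᵀ = M - Q * M - M * Qᵀ := calc
    P * M * Pᵀ = M - Q * M - M * Qᵀ + Q * M * Qᵀ := by
      rw [hPQ, transpose_sub, transpose_one]
      noncomm_ring
    _ = M - Q * M - M * Qᵀ := by rw [hQMQ, add_zero]
  have hleft : ((Q * M)ᵀ * M).trace = c := by
    rw [transpose_mul, trace_mul_comm, ← Matrix.mul_assoc, hMM', smul_mul, Matrix.one_mul,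
      trace_smul, trace_transpose, hQtrace, smul_eq_mul, mul_one]
  have hright : ((M * Qᵀ)ᵀ * M).trace = c := by
    rw [transpose_mul, transpose_transpose, Matrix.mul_assoc, hMM, Matrix.mul_smul, Matrix.mul_one,
      trace_smul, hQtrace, smul_eq_mul, mul_one]
  rw [hPMP, transpose_sub, transpose_sub, Matrix.sub_mul, Matrix.sub_mul, trace_sub, trace_sub,
    hleft, hright, hMM, trace_smul, trace_one, smul_eq_mul]
  ring

end IdempotentMatrix

section TwoForms

open Matrix

theorem ip6_wedge_wedge (x y z t : V4) :
    ip6 (wedge x y) (wedge z t) = ip4 x z * ip4 y t - ip4 x t * ip4 y z := by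
  simp only [ip6, ip4, wedge, pr, Fin.sum_univ_four, Fin.sum_univ_six, cons_val]
  ring

theorem wedge_std4 (k : Fin 6) : wedge (std4 (pr k).1) (std4 (pr k).2) = Pi.single k 1 := by
  ext m
  fin_cases k <;> fin_cases m <;> simp [wedge, std4, pr]

theorem eq_of_ip6_wedge_eq {a b : L6} (h : ∀ z t, ip6 a (wedge z t) = ip6 b (wedge z t)) :
    a = b := by
  ext k
  simpa [wedge_std4, ip6, Pi.single_apply] using h (std4 (pr k).1) (std4 (pr k).2)

theorem linearMap_ext_wedge {E : Type*} [AddCommMonoid E] [Module ℝ E] {f g : L6 →ₗ[ℝ] E}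
    (h : ∀ x y, f (wedge x y) = g (wedge x y)) : f = g := by
  refine LinearMap.pi_ext' fun k => LinearMap.ext_ring ?_
  simpa [wedge_std4] using h (std4 (pr k).1) (std4 (pr k).2)

/-- The identification of `Λ²ℝ⁴` with the skew-symmetric `4 × 4` matrices, normalized so that
`x ∧ y` corresponds to `x yᵀ - y xᵀ`. -/
def skewMatrix : L6 →ₗ[ℝ] Matrix (Fin 4) (Fin 4) ℝ where
  toFun w := !![0, w 0, w 1, w 2; -w 0, 0, w 3, w 4; -w 1, -w 3, 0, w 5; -w 2, -w 4, -w 5, 0]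
  map_add' a b := by
    ext i j
    fin_cases i <;> fin_cases j <;> simp [add_comm]
  map_smul' c a := by
    ext i j
    fin_cases i <;> fin_cases j <;> simp

theorem skewMatrix_apply (w : L6) : skewMatrix w =
    !![0, w 0, w 1, w 2; -w 0, 0, w 3, w 4; -w 1, -w 3, 0, w 5; -w 2, -w 4, -w 5, 0] := rfl

theorem transpose_skewMatrix (w : L6) : (skewMatrix w)ᵀ = -skewMatrix w := by
  ext i j
  fin_cases i <;> fin_cases j <;> simp [skewMatrix_apply]

theorem skewMatrix_wedge (x y : V4) :
    skewMatrix (wedge x y) = vecMulVec x y - vecMulVec y x := by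
  ext i j
  fin_cases i <;> fin_cases j <;>
    simp only [skewMatrix_apply, wedge, pr, Matrix.sub_apply, vecMulVec_apply, of_apply,
      Fin.zero_eta, Fin.mk_one, Fin.reduceFinMk, cons_val, cons_val', cons_val_fin_one] <;>
    ring

theorem trace_transpose_skewMatrix_mul_skewMatrix (a b : L6) :
    ((skewMatrix a)ᵀ * skewMatrix b).trace = 2 * ip6 a b := by
  simp only [trace, diag_apply, mul_apply, transpose_apply, skewMatrix_apply, of_apply, ip6,
    Fin.sum_univ_four, Fin.sum_univ_six, cons_val, cons_val', cons_val_fin_one]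
  ring

theorem transpose_skewMatrix_hodge_mul_skewMatrix (w : L6) :
    (skewMatrix (hodge w))ᵀ * skewMatrix w = (ip6 (hodge w) w / 2) • 1 := by
  ext i j
  fin_cases i <;> fin_cases j <;>
    simp only [mul_apply, transpose_apply, skewMatrix_apply, hodge, ip6, of_apply,
      Matrix.smul_apply, one_apply, Fin.sum_univ_four, Fin.sum_univ_six, Fin.zero_eta, Fin.mk_one,
      Fin.reduceFinMk, Fin.reduceEq, zero_ne_one, one_ne_zero, if_true, if_false, smul_eq_mul,
      cons_val, cons_val', cons_val_fin_one] <;>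
    ring

theorem SelfDual.transpose_skewMatrix_mul_self {w : L6} (hw : SelfDual w) :
    (skewMatrix w)ᵀ * skewMatrix w = (ip6 w w / 2) • 1 := by
  have h := transpose_skewMatrix_hodge_mul_skewMatrix w
  rwa [show hodge w = w from hw] at h

theorem AntiSelfDual.transpose_skewMatrix_mul_self {w : L6} (hw : AntiSelfDual w) :
    (skewMatrix w)ᵀ * skewMatrix w = (ip6 w w / 2) • 1 := by
  have h := transpose_skewMatrix_hodge_mul_skewMatrix w
  have hip : ip6 (-w) w = -ip6 w w := neg_dotProduct w w
  rwa [show hodge w = -w from hw, hip, map_neg, transpose_neg, Matrix.neg_mul, neg_div, neg_smul,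
    neg_inj] at h

/-- `A` is the exterior square `Λ²P`, the endomorphism of `Λ²ℝ⁴` induced by the endomorphism `P`
of `ℝ⁴`. -/
def IsExteriorSquare (P : Matrix (Fin 4) (Fin 4) ℝ) (A : M6) : Prop :=
  ∀ x y, appM A (wedge x y) = wedge (P *ᵥ x) (P *ᵥ y)

variable {P : Matrix (Fin 4) (Fin 4) ℝ} {A : M6}

theorem isExteriorSquare_iff : IsExteriorSquare P A ↔
    ∀ x y z t, ip6 (appM A (wedge x y)) (wedge z t) =
      ip4 (P *ᵥ x) z * ip4 (P *ᵥ y) t - ip4 (P *ᵥ x) t * ip4 (P *ᵥ y) z := by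
  simp only [← ip6_wedge_wedge]
  exact ⟨fun h x y z t => by rw [h], fun h x y => eq_of_ip6_wedge_eq (h x y)⟩

namespace IsExteriorSquare

theorem bianchi (hA : IsExteriorSquare P A) (hP : P.IsSymm) : Bianchi A := by
  have hsymm : ∀ x y, ip4 (P *ᵥ x) y = ip4 (P *ᵥ y) x := fun x y => by
    have h := dotProduct_transpose_mulVec P y x
    rwa [hP.eq, dotProduct_comm, dotProduct_comm x] at h
  intro x y z t
  simp only [isExteriorSquare_iff.mp hA]
  rw [hsymm z y, hsymm x z, hsymm y x]
  ring

theorem skewMatrix_appM (hA : IsExteriorSquare P A) (w : L6) :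
    skewMatrix (appM A w) = P * skewMatrix w * Pᵀ := by
  have h : skewMatrix ∘ₗ Matrix.mulVecLin (of A) =
      LinearMap.mulRight ℝ Pᵀ ∘ₗ LinearMap.mulLeft ℝ P ∘ₗ skewMatrix :=
    linearMap_ext_wedge fun x y => by
      change skewMatrix (appM A (wedge x y)) = P * skewMatrix (wedge x y) * Pᵀ
      rw [hA, skewMatrix_wedge, skewMatrix_wedge, Matrix.mul_sub, Matrix.sub_mul, mul_vecMulVec,
        mul_vecMulVec, vecMulVec_mul, vecMulVec_mul, vecMul_transpose, vecMul_transpose]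
  exact LinearMap.congr_fun h w

theorem ip6_appM_self (hA : IsExteriorSquare P A) (hP : IsIdempotentElem P) (htrace : P.trace = 3)
    {w : L6} (hw : (skewMatrix w)ᵀ * skewMatrix w = (ip6 w w / 2) • 1) :
    ip6 (appM A w) w = ip6 w w / 2 := by
  have h := trace_conj_mul_of_transpose_mul_self_eq_smul_one hP (by rw [htrace]; norm_num)
    (transpose_skewMatrix w) hw
  rw [← hA.skewMatrix_appM, trace_transpose_skewMatrix_mul_skewMatrix, Fintype.card_fin] at h
  push_cast at h
  linarith

end IsExteriorSquare

end TwoForms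

/-- the curvature operator of `ℝ×S³`, i.e. the symmetric
endomorphism of `Λ²ℝ⁴` determined by
`⟨R(x∧y), z∧t⟩ = ⟨Px,z⟩⟨Py,t⟩ − ⟨Px,t⟩⟨Py,z⟩` for the orthogonal projection
`P` onto a 3-dimensional subspace, is an algebraic curvature operator which is
both PIC₊ and PIC₋. -/
theorem curvature_of_product_with_sphere_is_pic (P : Fin 4 → Fin 4 → ℝ)
    (hPsymm : ∀ i j, P i j = P j i)
    (hPidem : ∀ i j, (∑ l, P i l * P l j) = P i j)
    (hPtrace : ∑ i, P i i = 3)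
    (A : M6) (hAsymm : IsSymm6 A)
    (hchar : ∀ x y z t : V4, ip6 (appM A (wedge x y)) (wedge z t)
      = ip4 (fun i => ∑ j, P i j * x j) z * ip4 (fun i => ∑ j, P i j * y j) t
        - ip4 (fun i => ∑ j, P i j * x j) t * ip4 (fun i => ∑ j, P i j * y j) z) :
    IsCurvOp A ∧ PICp A ∧ PICm A := by
  have hA : IsExteriorSquare (Matrix.of P) A := isExteriorSquare_iff.mpr hchar
  have hsymm : (Matrix.of P).IsSymm := Matrix.IsSymm.ext fun i j => hPsymm j i
  have hidem : IsIdempotentElem (Matrix.of P) := Matrix.ext hPidem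
  refine ⟨⟨hAsymm, hA.bianchi hsymm⟩, fun η ζ hη hζ hη₁ hζ₁ _ => ?_, fun η ζ hη hζ hη₁ hζ₁ _ => ?_⟩
  all_goals
    rw [hA.ip6_appM_self hidem hPtrace hη.transpose_skewMatrix_mul_self,
      hA.ip6_appM_self hidem hPtrace hζ.transpose_skewMatrix_mul_self, hη₁, hζ₁]
    norm_num
end
end
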